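/- arXiv:2008.05430 — 2 statements merged into one kernel-verified Lean document; each statement's English description precedes it below -/
import Mathlib

section
/- For every vertex v of G one has s(v) ≤ (1/(m+1)) · (λ₀ · ρ(v)^m + λ₁ · ρ(v) · (1 − ρ(v))^{m−1}). -/
open scoped BigOperators

/-- The arc relation of the oriented star `S_{k,l}` on `Fin (k+l+1)`:
vertex `0` is the center, vertices `1,…,k` are the out-leaves and
vertices `k+1,…,k+l` are the in-leaves. -/
def StarArc (k l : ℕ) (a b : Fin (k + l + 1)) : Prop :=
  (a.val = 0 ∧ 1 ≤ b.val ∧ b.val ≤ k) ∨ (b.val = 0 ∧ k + 1 ≤ a.val)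

/-- `φ` witnesses an induced copy of `S_{k,l}` in the digraph with arc relation `A`:
it is injective and maps arcs to arcs and non-arcs to non-arcs. -/
def IsStarEmb (k l : ℕ) {V : Type*} (A : V → V → Prop) (φ : Fin (k + l + 1) → V) : Prop :=
  Function.Injective φ ∧ ∀ a b, StarArc k l a b ↔ A (φ a) (φ b)

/-- `s(G)`: the probability that a uniformly random map `V(S_{k,l}) → V(G)`
induces a copy of `S_{k,l}`. -/
noncomputable def starProb (k l : ℕ) (V : Type*) [Fintype V] (A : V → V → Prop) : ℝ :=
  (Nat.card {φ : Fin (k + l + 1) → V // IsStarEmb k l A φ} : ℝ) /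
    (Fintype.card V : ℝ) ^ (k + l + 1)

/-- The probability that a uniformly random map induces a copy of `S_{k,l}`
and moreover has property `P`. -/
noncomputable def starProbOn (k l : ℕ) {V : Type*} [Fintype V] (A : V → V → Prop)
    (P : (Fin (k + l + 1) → V) → Prop) : ℝ :=
  (Nat.card {φ : Fin (k + l + 1) → V // IsStarEmb k l A φ ∧ P φ} : ℝ) /
    (Fintype.card V : ℝ) ^ (k + l + 1)

/-- `s(z→v) = Pr[φ ∈ 𝒮 | φ z = v]`. -/
noncomputable def sCond (k l : ℕ) {V : Type*} [Fintype V] (A : V → V → Prop)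
    (z : Fin (k + l + 1)) (v : V) : ℝ :=
  (Nat.card {φ : Fin (k + l + 1) → V // IsStarEmb k l A φ ∧ φ z = v} : ℝ) /
    (Fintype.card V : ℝ) ^ (k + l)

/-- `Pr[φ ∈ 𝒮 ∧ P φ | φ(c) = v]`, where `c = 0` is the center of the star. -/
noncomputable def sCondOn (k l : ℕ) {V : Type*} [Fintype V] (A : V → V → Prop) (v : V)
    (P : (Fin (k + l + 1) → V) → Prop) : ℝ :=
  (Nat.card {φ : Fin (k + l + 1) → V // IsStarEmb k l A φ ∧ φ 0 = v ∧ P φ} : ℝ) /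
    (Fintype.card V : ℝ) ^ (k + l)

open scoped Fin.NatCast in
/-- `s(v) = (s(c→v) + l·s(i→v) + k·s(o→v))/(m+1)`, where the center is `0`,
`k+1` is an in-leaf and `1` is an out-leaf. -/
noncomputable def sVert (k l : ℕ) {V : Type*} [Fintype V] (A : V → V → Prop) (v : V) : ℝ :=
  (sCond k l A 0 v + l * sCond k l A ((k + 1 : ℕ) : Fin (k + l + 1)) v
      + k * sCond k l A 1 v) / ((k : ℝ) + l + 1)

/-- `ρ(v)`: the proportion of vertices adjacent to `v`. -/
noncomputable def rho {V : Type*} [Fintype V] (A : V → V → Prop) (v : V) : ℝ :=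
  (Nat.card {u : V // A v u ∨ A u v} : ℝ) / (Fintype.card V : ℝ)

/-- `ρ⁺_B(v)`: the proportion of vertices that are out-neighbours of `v` lying in `B`. -/
noncomputable def rhoPIn {V : Type*} [Fintype V] (A : V → V → Prop) (B : Set V) (v : V) : ℝ :=
  (Nat.card {u : V // A v u ∧ u ∈ B} : ℝ) / (Fintype.card V : ℝ)

/-- `ρ⁻_B(v)`: the proportion of vertices that are in-neighbours of `v` lying in `B`. -/
noncomputable def rhoMIn {V : Type*} [Fintype V] (A : V → V → Prop) (B : Set V) (v : V) : ℝ :=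
  (Nat.card {u : V // A u v ∧ u ∈ B} : ℝ) / (Fintype.card V : ℝ)

/-- `ρ_B(v)`: the proportion of vertices adjacent to `v` lying in `B`. -/
noncomputable def rhoIn {V : Type*} [Fintype V] (A : V → V → Prop) (B : Set V) (v : V) : ℝ :=
  (Nat.card {u : V // (A v u ∨ A u v) ∧ u ∈ B} : ℝ) / (Fintype.card V : ℝ)

/-- `μ(B) = |B|/n`. -/
noncomputable def muSet {V : Type*} [Fintype V] (B : Set V) : ℝ :=
  (Nat.card B : ℝ) / (Fintype.card V : ℝ)

/-- `X`: the set of vertices of large degree, `ρ(v) ≥ 1/2`. -/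
def bigX {V : Type*} [Fintype V] (A : V → V → Prop) : Set V := {v | 1 / 2 ≤ rho A v}

/-- `Y = V(G) \ X`. -/
def bigY {V : Type*} [Fintype V] (A : V → V → Prop) : Set V := (bigX A)ᶜ

/-- `α = μ(X)`. -/
noncomputable def alphaX {V : Type*} [Fintype V] (A : V → V → Prop) : ℝ := muSet (bigX A)

/-- `D = min_{x ∈ X} ρ(x)`. -/
noncomputable def Dmin {V : Type*} [Fintype V] (A : V → V → Prop) : ℝ :=
  sInf (rho A '' bigX A)

/-- `β = max_{y ∈ Y} ρ_Y(y)`. -/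
noncomputable def betaY {V : Type*} [Fintype V] (A : V → V → Prop) : ℝ :=
  sSup ((fun y => rhoIn A (bigY A) y) '' bigY A)

/-- `γ = min_{x ∈ X} ρ⁻_Y(x)`. -/
noncomputable def gammaX {V : Type*} [Fintype V] (A : V → V → Prop) : ℝ :=
  sInf ((fun x => rhoMIn A (bigY A) x) '' bigX A)

/-- `S = (m+1)·min_{v ∈ V(G)} s(v)`. -/
noncomputable def Smin (k l : ℕ) {V : Type*} [Fintype V] (A : V → V → Prop) : ℝ :=
  ((k : ℝ) + l + 1) * sInf (Set.range (sVert k l A))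

/-- `S₁ = min_{x ∈ X} (ρ⁺_Y(x))^k (ρ⁻_Y(x))^l`. -/
noncomputable def S1min (k l : ℕ) {V : Type*} [Fintype V] (A : V → V → Prop) : ℝ :=
  sInf ((fun x => rhoPIn A (bigY A) x ^ k * rhoMIn A (bigY A) x ^ l) '' bigX A)

/-- `S₂ = S₁ − ((m−1)/((m+1)·C(m,k)))·(α+β)(1−α)(1−D)^{m−2}`. -/
noncomputable def S2min (k l : ℕ) {V : Type*} [Fintype V] (A : V → V → Prop) : ℝ :=
  S1min k l A - (((k : ℝ) + l - 1) / (((k : ℝ) + l + 1) * (Nat.choose (k + l) k : ℝ)))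
    * (alphaX A + betaY A) * (1 - alphaX A) * (1 - Dmin A) ^ (k + l - 2)

/-- `λ₀ = k^k l^l / m^m`. -/
noncomputable def lam0 (k l : ℕ) : ℝ := (k : ℝ) ^ k * (l : ℝ) ^ l / ((k : ℝ) + l) ^ (k + l)

/-- `λ₁ = k^k l (l−1)^{l−1} / (m−1)^{m−1}` (with the convention `0⁰ = 1`). -/
noncomputable def lam1 (k l : ℕ) : ℝ :=
  (k : ℝ) ^ k * (l : ℝ) * ((l : ℝ) - 1) ^ (l - 1) / ((k : ℝ) + l - 1) ^ (k + l - 1)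

/-- The edge density `ρ(Z)` of a set of vertices `Z`: the number of unordered adjacent
pairs in `Z` divided by `C(|Z|,2)`. -/
noncomputable def densSet {V : Type*} [Fintype V] (A : V → V → Prop) (Z : Set V) : ℝ :=
  ((Nat.card {p : V × V // p.1 ∈ Z ∧ p.2 ∈ Z ∧ (A p.1 p.2 ∨ A p.2 p.1)} : ℝ) / 2) /
    (Nat.choose (Nat.card Z) 2 : ℝ)

/-- `d = 1 − (E_{x ∈ X} ρ⁻_Y(x))/(1−α)`. -/
noncomputable def dXY {V : Type*} [Fintype V] (A : V → V → Prop) : ℝ :=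
  1 - ((∑ᶠ x ∈ bigX A, rhoMIn A (bigY A) x) / (Nat.card (bigX A) : ℝ)) / (1 - alphaX A)

/-- `OPT(k,l)`. -/
noncomputable def OPT (k l : ℕ) : ℝ :=
  if k = l then
    (1 / 2 ^ (2 * k)) *
      sSup {y : ℝ | ∃ a ∈ Set.Icc (0 : ℝ) 1, y = a * (1 - a) ^ (2 * k) + (1 - a) * a ^ (2 * k)}
  else
    sSup {y : ℝ | ∃ a ∈ Set.Icc (0 : ℝ) (1 / 2),
      ∃ d ∈ Set.Icc (0 : ℝ) ((k : ℝ) / ((k : ℝ) + (l : ℝ))),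
      y = a * (1 - a) ^ (k + l) * d ^ k * (1 - d) ^ l
        + (((k : ℝ) - 1) ^ (k - 1) * (l : ℝ) ^ l / ((k : ℝ) + (l : ℝ) - 1) ^ (k + l - 1))
          * (1 - a) * a ^ (k + l) * (1 - d)}

/-!
Condition on where the star vertex mapped to `v` sits. If it is the center, the out-leaves and the
in-leaves go to disjoint subsets of the neighborhood of `v`. If it is a leaf, the center goes to a
neighbor `c` of `v`, and since distinct leaves are non-adjacent, the other leaves go to disjoint
subsets of the non-neighborhood of `v`. So each count is bounded by a product `a ^ i * b ^ j` with
`a + b` at most the degree or the non-degree of `v`, and weighted AM-GM gives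
`a ^ i * b ^ j ≤ lam0 i j * (a + b) ^ (i + j)`.

An in-leaf at `v` contributes `l * lam0 k (l - 1) = lam1 k l` for each out-neighbor of `v`, and an
out-leaf contributes `k * lam0 (k - 1) l` for each in-neighbor. Since `l ≤ k` the second constant is
at most the first, so `lam1 k l` bounds the contribution of every neighbor.
-/

section WeightedAMGM

lemma lam0_nonneg (i j : ℕ) : 0 ≤ lam0 i j := by
  unfold lam0; positivity

lemma lam1_eq_mul_lam0 {k l : ℕ} (hl : 1 ≤ l) : lam1 k l = l * lam0 k (l - 1) := by
  rw [lam1, lam0, Nat.cast_pred hl, ← Nat.add_sub_assoc hl, ← add_sub_assoc]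
  ring

-- If `i = 0` then `a / i = 0`, but the factor `(a / i) ^ i` is `0 ^ 0 = 1`, as it should be.
lemma div_pow_mul_div_pow_le_add_div_pow (i j : ℕ) {a b : ℝ} (ha : 0 ≤ a) (hb : 0 ≤ b) :
    (a / i) ^ i * (b / j) ^ j ≤ ((a + b) / (i + j)) ^ (i + j) := by
  rcases Nat.eq_zero_or_pos (i + j) with hij | hij
  · obtain ⟨rfl, rfl⟩ := Nat.add_eq_zero_iff.1 hij
    simp
  have hpos : (0 : ℝ) < i + j := by exact_mod_cast hij
  have rpow_div_pow : ∀ {x : ℝ} (e : ℕ), 0 ≤ x → (x ^ ((e : ℝ) / (i + j))) ^ (i + j) = x ^ e := by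
    intro x e hx
    rw [← Real.rpow_mul_natCast hx, Nat.cast_add, div_mul_cancel₀ _ hpos.ne', Real.rpow_natCast]
  have mul_div_le : ∀ {x : ℝ} (e : ℕ), 0 ≤ x → (e : ℝ) / (i + j) * (x / e) ≤ x / (i + j) := by
    intro x e hx
    rw [div_mul_eq_mul_div, mul_div_left_comm]
    gcongr
    exact mul_le_of_le_one_right hx (div_self_le_one _)
  have amgm := Real.geom_mean_le_arith_mean2_weighted (w₁ := (i : ℝ) / (i + j))
    (w₂ := (j : ℝ) / (i + j)) (p₁ := a / i) (p₂ := b / j) (by positivity) (by positivity)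
    (by positivity) (by positivity) (by field_simp)
  calc (a / i) ^ i * (b / j) ^ j
      = ((a / i) ^ ((i : ℝ) / (i + j)) * (b / j) ^ ((j : ℝ) / (i + j))) ^ (i + j) := by
        rw [mul_pow, rpow_div_pow i (by positivity), rpow_div_pow j (by positivity)]
    _ ≤ ((a + b) / (i + j)) ^ (i + j) := by
        gcongr
        rw [add_div]
        exact amgm.trans (add_le_add (mul_div_le i ha) (mul_div_le j hb))

lemma pow_mul_pow_le_lam0_mul_pow (i j : ℕ) {a b s : ℝ} (ha : 0 ≤ a) (hb : 0 ≤ b)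
    (hab : a + b ≤ s) : a ^ i * b ^ j ≤ lam0 i j * s ^ (i + j) := by
  have pow_mul_div_pow : ∀ (e : ℕ) (x : ℝ), x ^ e = (e : ℝ) ^ e * (x / e) ^ e := by
    intro e x
    rcases eq_or_ne e 0 with rfl | he
    · simp
    · rw [← mul_pow, mul_div_cancel₀ x (Nat.cast_ne_zero.2 he)]
  calc a ^ i * b ^ j
      = (i : ℝ) ^ i * (j : ℝ) ^ j * ((a / i) ^ i * (b / j) ^ j) := by
        rw [pow_mul_div_pow i a, pow_mul_div_pow j b]; ring
    _ ≤ (i : ℝ) ^ i * (j : ℝ) ^ j * ((a + b) / (i + j)) ^ (i + j) := by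
        gcongr
        exact div_pow_mul_div_pow_le_add_div_pow i j ha hb
    _ ≤ (i : ℝ) ^ i * (j : ℝ) ^ j * (s / (i + j)) ^ (i + j) := by gcongr
    _ = lam0 i j * s ^ (i + j) := by rw [lam0, div_pow]; ring

-- Equivalent to `(1 + 1 / L) ^ L ≤ (1 + 1 / K) ^ K`: weighted AM-GM for `L + 1` with weight `L`
-- and `K - L` with weight `K - L`.
lemma pow_self_mul_succ_pow_le {K L : ℕ} (h : L ≤ K) :
    (K : ℝ) ^ K * ((L : ℝ) + 1) ^ L ≤ ((K : ℝ) + 1) ^ K * (L : ℝ) ^ L := by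
  obtain ⟨d, rfl⟩ := Nat.exists_eq_add_of_le h
  have amgm := pow_mul_pow_le_lam0_mul_pow L d (a := (L : ℝ) + 1) (b := d) (s := L + d + 1)
    (by positivity) (by positivity) (by linarith)
  have hd : (0 : ℝ) < (d : ℝ) ^ d := by exact_mod_cast Nat.pow_self_pos
  have hLd : (0 : ℝ) < ((L : ℝ) + d) ^ (L + d) := by exact_mod_cast Nat.pow_self_pos
  rw [lam0, div_mul_eq_mul_div, le_div_iff₀ hLd] at amgm
  push_cast
  refine le_of_mul_le_mul_right ?_ hd
  linarith

lemma succ_mul_lam0_le {K L : ℕ} (h : L ≤ K) :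
    ((K : ℝ) + 1) * lam0 K (L + 1) ≤ (L + 1) * lam0 (K + 1) L := by
  have denom_eq : ((K : ℝ) + 1 + L) ^ (K + 1 + L) = (K + (L + 1)) ^ (K + (L + 1)) := by
    congr 1 <;> ring
  simp only [lam0, Nat.cast_add_one]
  rw [denom_eq, ← mul_div_assoc, ← mul_div_assoc]
  gcongr ?_ / _
  calc ((K : ℝ) + 1) * (K ^ K * (L + 1) ^ (L + 1))
      = (K + 1) * (L + 1) * (K ^ K * (L + 1) ^ L) := by ring
    _ ≤ (K + 1) * (L + 1) * ((K + 1) ^ K * L ^ L) :=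
        mul_le_mul_of_nonneg_left (pow_self_mul_succ_pow_le h) (by positivity)
    _ = (L + 1) * ((K + 1) ^ (K + 1) * L ^ L) := by ring

lemma mul_lam0_pred_le {k l : ℕ} (hl : 1 ≤ l) (hlk : l ≤ k) :
    k * lam0 (k - 1) l ≤ l * lam0 k (l - 1) := by
  obtain ⟨K, rfl⟩ := Nat.exists_eq_add_of_le' (hl.trans hlk)
  obtain ⟨L, rfl⟩ := Nat.exists_eq_add_of_le' hl
  simpa using succ_mul_lam0_le (Nat.le_of_add_le_add_right hlk)

end WeightedAMGM

section Leaves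

/-- The out-leaves of `S_{k,l}`, among the vertices `Fin (k + l + 1)`. -/
def outLeaves (k l : ℕ) : Finset (Fin (k + l + 1)) := {a | 1 ≤ a.val ∧ a.val ≤ k}

/-- The in-leaves of `S_{k,l}`, among the vertices `Fin (k + l + 1)`. -/
def inLeaves (k l : ℕ) : Finset (Fin (k + l + 1)) := {a | k + 1 ≤ a.val}

variable {k l : ℕ} {a : Fin (k + l + 1)}

@[simp] lemma mem_outLeaves : a ∈ outLeaves k l ↔ 1 ≤ a.val ∧ a.val ≤ k := by
  simp [outLeaves]

@[simp] lemma mem_inLeaves : a ∈ inLeaves k l ↔ k + 1 ≤ a.val := by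
  simp [inLeaves]

variable (k l) in
lemma disjoint_outLeaves_inLeaves : Disjoint (outLeaves k l) (inLeaves k l) := by
  rw [Finset.disjoint_left]
  simp only [mem_outLeaves, mem_inLeaves]
  omega

lemma mem_outLeaves_or_mem_inLeaves (ha : a ≠ 0) : a ∈ outLeaves k l ∨ a ∈ inLeaves k l := by
  have := Fin.val_ne_zero_iff.2 ha
  simp only [mem_outLeaves, mem_inLeaves]
  omega

variable (k l) in
@[simp] lemma card_inLeaves : (inLeaves k l).card = l := by
  have h : inLeaves k l = ({a | a.val < k + 1} : Finset (Fin (k + l + 1)))ᶜ := by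
    ext a
    simp only [mem_inLeaves, Finset.mem_compl, Finset.mem_filter_univ, not_lt]
  rw [h, Finset.card_compl, Fin.card_filter_val_lt, Fintype.card_fin]
  omega

variable (k l) in
@[simp] lemma card_outLeaves : (outLeaves k l).card = k := by
  have h : (outLeaves k l).disjUnion (inLeaves k l) (disjoint_outLeaves_inLeaves k l) =
      ({0}ᶜ : Finset (Fin (k + l + 1))) := by
    ext a
    simp only [Finset.mem_disjUnion, mem_outLeaves, mem_inLeaves, Finset.mem_compl,
      Finset.mem_singleton, Fin.ext_iff, Fin.val_zero]
    omega
  have hcard := congrArg Finset.card h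
  rw [Finset.card_disjUnion, card_inLeaves, Finset.card_compl, Fintype.card_fin,
    Finset.card_singleton] at hcard
  omega

end Leaves

section Neighborhoods

variable {V : Type*} [Fintype V] (A : V → V → Prop)

open Classical in
/-- `N⁺(v) \ N⁻(v)`, which is `N⁺(v)` in an oriented graph. In an arbitrary digraph these are the
vertices that can serve as out-leaves of an induced star centered at `v`. -/
noncomputable def outOnly (v : V) : Finset V := {u | A v u ∧ ¬A u v}

open Classical in
/-- `N⁻(v) \ N⁺(v)`, which is `N⁻(v)` in an oriented graph. In an arbitrary digraph these are the
vertices that can serve as in-leaves of an induced star centered at `v`. -/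
noncomputable def inOnly (v : V) : Finset V := {u | A u v ∧ ¬A v u}

open Classical in
/-- The neighborhood `N⁺(v) ∪ N⁻(v)`, whose proportion is `ρ(v)`. -/
noncomputable def nbrs (v : V) : Finset V := {u | A v u ∨ A u v}

variable {A} {u v : V}

@[simp] lemma mem_outOnly : u ∈ outOnly A v ↔ A v u ∧ ¬A u v := by simp [outOnly]

@[simp] lemma mem_inOnly : u ∈ inOnly A v ↔ A u v ∧ ¬A v u := by simp [inOnly]

@[simp] lemma mem_nbrs : u ∈ nbrs A v ↔ A v u ∨ A u v := by simp [nbrs]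

variable (A)

lemma disjoint_outOnly_inOnly (v : V) : Disjoint (outOnly A v) (inOnly A v) := by
  rw [Finset.disjoint_left]
  simp only [mem_outOnly, mem_inOnly]
  tauto

lemma rho_eq_card_nbrs_div (v : V) : rho A v = (nbrs A v).card / Fintype.card V := by
  rw [rho, Nat.subtype_card (nbrs A v) fun _ => mem_nbrs]

lemma rho_le_one (v : V) : rho A v ≤ 1 := by
  rw [rho_eq_card_nbrs_div]
  exact div_le_one_of_le₀ (mod_cast Finset.card_le_univ _) (Nat.cast_nonneg _)

lemma card_outOnly_add_card_inOnly_le (v : V) :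
    (outOnly A v).card + (inOnly A v).card ≤ (nbrs A v).card := by
  rw [← Finset.card_disjUnion _ _ (disjoint_outOnly_inOnly A v)]
  refine Finset.card_le_card fun u => ?_
  simp only [Finset.mem_disjUnion, mem_outOnly, mem_inOnly, mem_nbrs]
  tauto

lemma card_outOnly_div_add_card_inOnly_div_le_rho (v : V) :
    ((outOnly A v).card : ℝ) / Fintype.card V + (inOnly A v).card / Fintype.card V ≤ rho A v := by
  rw [rho_eq_card_nbrs_div, ← add_div]
  gcongr
  exact_mod_cast card_outOnly_add_card_inOnly_le A v

lemma card_outOnly_sdiff_add_card_inOnly_sdiff_le [DecidableEq V] (c : V) (s : Finset V) :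
    (outOnly A c \ s).card + (inOnly A c \ s).card ≤ sᶜ.card := by
  rw [← Finset.card_union_of_disjoint
    ((disjoint_outOnly_inOnly A c).mono Finset.sdiff_subset Finset.sdiff_subset)]
  refine Finset.card_le_card fun u => ?_
  simp only [Finset.mem_union, Finset.mem_sdiff, Finset.mem_compl]
  tauto

end Neighborhoods

namespace IsStarEmb

variable {k l : ℕ} {V : Type*} [Fintype V] {A : V → V → Prop} {φ : Fin (k + l + 1) → V}
  {a b : Fin (k + l + 1)}

lemma apply_mem_outOnly (h : IsStarEmb k l A φ) (ha : a ∈ outLeaves k l) :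
    φ a ∈ outOnly A (φ 0) := by
  rw [mem_outLeaves] at ha
  rw [mem_outOnly, ← h.2, ← h.2, StarArc, StarArc, Fin.val_zero]
  omega

lemma apply_mem_inOnly (h : IsStarEmb k l A φ) (ha : a ∈ inLeaves k l) :
    φ a ∈ inOnly A (φ 0) := by
  rw [mem_inLeaves] at ha
  rw [mem_inOnly, ← h.2, ← h.2, StarArc, StarArc, Fin.val_zero]
  omega

lemma apply_zero_mem_inOnly (h : IsStarEmb k l A φ) (ha : a ∈ outLeaves k l) :
    φ 0 ∈ inOnly A (φ a) := by
  simpa only [mem_inOnly, mem_outOnly] using h.apply_mem_outOnly ha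

lemma apply_zero_mem_outOnly (h : IsStarEmb k l A φ) (ha : a ∈ inLeaves k l) :
    φ 0 ∈ outOnly A (φ a) := by
  simpa only [mem_inOnly, mem_outOnly] using h.apply_mem_inOnly ha

lemma apply_notMem_nbrs (h : IsStarEmb k l A φ) (ha : a ≠ 0) (hb : b ≠ 0) :
    φ a ∉ nbrs A (φ b) := by
  rw [← Fin.val_ne_zero_iff] at ha hb
  rw [mem_nbrs, ← h.2, ← h.2, StarArc, StarArc]
  omega

end IsStarEmb

section Counting

lemma card_subtype_le_card_pow_mul_card_pow {ι V : Type*} [Finite ι] [Finite V]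
    {P : (ι → V) → Prop} {O I : Finset ι} (hOI : Disjoint O I) {X Y : Finset V} {f : ι → V}
    (hO : ∀ φ, P φ → ∀ a ∈ O, φ a ∈ X) (hI : ∀ φ, P φ → ∀ a ∈ I, φ a ∈ Y)
    (hf : ∀ φ, P φ → ∀ a, a ∉ O → a ∉ I → φ a = f a) :
    Nat.card {φ : ι → V // P φ} ≤ X.card ^ O.card * Y.card ^ I.card := by
  classical
  have := Fintype.ofFinite ι
  have := Fintype.ofFinite V
  let range : ι → Finset V := fun a => if a ∈ O then X else if a ∈ I then Y else {f a}
  have mem_range : ∀ φ, P φ → φ ∈ Fintype.piFinset range := by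
    intro φ hφ
    rw [Fintype.mem_piFinset]
    intro a
    simp only [range]
    split_ifs with haO haI
    · exact hO φ hφ a haO
    · exact hI φ hφ a haI
    · exact Finset.mem_singleton.2 (hf φ hφ a haO haI)
  have card_range : ∀ a, (range a).card =
      (if a ∈ O then X.card else 1) * (if a ∈ I then Y.card else 1) := by
    intro a
    have notMem : a ∈ O → a ∉ I := fun ha => Finset.disjoint_left.1 hOI ha
    simp only [range]
    split_ifs <;> simp_all
  calc Nat.card {φ : ι → V // P φ}
      ≤ (Fintype.piFinset range).card := by
        rw [Nat.card_eq_fintype_card, Fintype.card_subtype]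
        exact Finset.card_le_card fun φ hφ => mem_range φ (Finset.mem_filter.1 hφ).2
    _ = X.card ^ O.card * Y.card ^ I.card := by
        simp only [Fintype.card_piFinset, card_range, Finset.prod_mul_distrib, Finset.prod_ite_mem,
          Finset.univ_inter, Finset.prod_const]

lemma card_subtype_le_card_mul_of_fiber_le {α β : Type*} [Finite α] {P : α → Prop} (f : α → β)
    {t : Finset β} (hf : ∀ x, P x → f x ∈ t) {N : ℝ}
    (hN : ∀ y ∈ t, (Nat.card {x // P x ∧ f x = y} : ℝ) ≤ N) :
    (Nat.card {x // P x} : ℝ) ≤ t.card * N := by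
  classical
  have := Fintype.ofFinite α
  simp only [Nat.card_eq_fintype_card, Fintype.card_subtype] at hN ⊢
  rw [Finset.card_eq_sum_card_fiberwise (t := t) (f := f)
    fun x hx => hf x (Finset.mem_filter.1 hx).2, Nat.cast_sum, ← nsmul_eq_mul]
  simp only [Finset.filter_filter]
  exact Finset.sum_le_card_nsmul _ _ _ hN

variable {k l : ℕ} {V : Type*} [Fintype V] (A : V → V → Prop)

lemma card_starEmb_center_le (v : V) :
    Nat.card {φ : Fin (k + l + 1) → V // IsStarEmb k l A φ ∧ φ 0 = v} ≤
      (outOnly A v).card ^ k * (inOnly A v).card ^ l := by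
  have h := card_subtype_le_card_pow_mul_card_pow (disjoint_outLeaves_inLeaves k l)
    (P := fun φ => IsStarEmb k l A φ ∧ φ 0 = v) (X := outOnly A v) (Y := inOnly A v)
    (f := fun _ => v) ?_ ?_ ?_
  · rwa [card_outLeaves, card_inLeaves] at h
  · rintro φ ⟨hφ, rfl⟩ a ha
    exact hφ.apply_mem_outOnly ha
  · rintro φ ⟨hφ, rfl⟩ a ha
    exact hφ.apply_mem_inOnly ha
  · rintro φ ⟨-, hφ⟩ a haO haI
    obtain rfl : a = 0 := by
      by_contra ha
      exact (mem_outLeaves_or_mem_inLeaves ha).elim haO haI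
    exact hφ

lemma card_starEmb_leaf_center_le [DecidableEq V] {z : Fin (k + l + 1)} (hz : z ≠ 0) (v c : V) :
    Nat.card {φ : Fin (k + l + 1) → V // (IsStarEmb k l A φ ∧ φ z = v) ∧ φ 0 = c} ≤
      (outOnly A c \ nbrs A v).card ^ ((outLeaves k l).erase z).card *
        (inOnly A c \ nbrs A v).card ^ ((inLeaves k l).erase z).card := by
  refine card_subtype_le_card_pow_mul_card_pow (f := fun a => if a = 0 then c else v)
    ((disjoint_outLeaves_inLeaves k l).mono (Finset.erase_subset _ _) (Finset.erase_subset _ _))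
    ?_ ?_ ?_
  · rintro φ ⟨⟨hφ, rfl⟩, rfl⟩ a ha
    have ha' := (Finset.mem_erase.1 ha).2
    have ha0 : a ≠ 0 := by rintro rfl; simp at ha'
    exact Finset.mem_sdiff.2 ⟨hφ.apply_mem_outOnly ha', hφ.apply_notMem_nbrs ha0 hz⟩
  · rintro φ ⟨⟨hφ, rfl⟩, rfl⟩ a ha
    have ha' := (Finset.mem_erase.1 ha).2
    have ha0 : a ≠ 0 := by rintro rfl; simp at ha'
    exact Finset.mem_sdiff.2 ⟨hφ.apply_mem_inOnly ha', hφ.apply_notMem_nbrs ha0 hz⟩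
  · rintro φ ⟨⟨-, rfl⟩, rfl⟩ a haO haI
    split_ifs with ha0
    · rw [ha0]
    · have haz : a = z := by
        by_contra haz
        simp only [Finset.mem_erase, haz, ne_eq, not_false_eq_true, true_and] at haO haI
        exact (mem_outLeaves_or_mem_inLeaves ha0).elim haO haI
      rw [haz]

end Counting

section Probabilities

variable {k l : ℕ} {V : Type*} [Fintype V] (A : V → V → Prop) (v : V)

lemma sCond_center_le : sCond k l A 0 v ≤ lam0 k l * rho A v ^ (k + l) := by
  rw [sCond, rho_eq_card_nbrs_div, div_pow, ← mul_div_assoc]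
  gcongr
  calc (Nat.card {φ : Fin (k + l + 1) → V // IsStarEmb k l A φ ∧ φ 0 = v} : ℝ)
      ≤ (outOnly A v).card ^ k * (inOnly A v).card ^ l := by
        exact_mod_cast card_starEmb_center_le A v
    _ ≤ lam0 k l * (nbrs A v).card ^ (k + l) :=
        pow_mul_pow_le_lam0_mul_pow k l (Nat.cast_nonneg _) (Nat.cast_nonneg _)
          (mod_cast card_outOnly_add_card_inOnly_le A v)

lemma card_starEmb_leaf_le {z : Fin (k + l + 1)} (hz : z ≠ 0) {s : Finset V} {i j : ℕ}
    (hs : ∀ φ, IsStarEmb k l A φ → φ z = v → φ 0 ∈ s)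
    (hi : ((outLeaves k l).erase z).card = i) (hj : ((inLeaves k l).erase z).card = j) :
    (Nat.card {φ : Fin (k + l + 1) → V // IsStarEmb k l A φ ∧ φ z = v} : ℝ) ≤
      s.card * (lam0 i j * (Fintype.card V * (1 - rho A v)) ^ (i + j)) := by
  classical
  have card_compl : ((nbrs A v)ᶜ.card : ℝ) = Fintype.card V * (1 - rho A v) := by
    have : Nonempty V := ⟨v⟩
    rw [rho_eq_card_nbrs_div, Finset.card_compl, Nat.cast_sub (Finset.card_le_univ _)]
    field_simp
  refine card_subtype_le_card_mul_of_fiber_le (fun φ => φ 0) (fun φ hφ => hs φ hφ.1 hφ.2) ?_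
  intro c _
  calc _ ≤ ((outOnly A c \ nbrs A v).card : ℝ) ^ i * (inOnly A c \ nbrs A v).card ^ j := by
        rw [← hi, ← hj]
        exact_mod_cast card_starEmb_leaf_center_le A hz v c
    _ ≤ lam0 i j * (nbrs A v)ᶜ.card ^ (i + j) :=
        pow_mul_pow_le_lam0_mul_pow i j (Nat.cast_nonneg _) (Nat.cast_nonneg _)
          (mod_cast card_outOnly_sdiff_add_card_inOnly_sdiff_le A c (nbrs A v))
    _ = _ := by rw [card_compl]

lemma sCond_leaf_le {z : Fin (k + l + 1)} (hz : z ≠ 0) {s : Finset V} {i j : ℕ}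
    (hs : ∀ φ, IsStarEmb k l A φ → φ z = v → φ 0 ∈ s)
    (hi : ((outLeaves k l).erase z).card = i) (hj : ((inLeaves k l).erase z).card = j)
    (hij : i + j + 1 = k + l) :
    sCond k l A z v ≤
      lam0 i j * (s.card / Fintype.card V) * (1 - rho A v) ^ (k + l - 1) := by
  have hn : (0 : ℝ) < Fintype.card V := by exact_mod_cast Fintype.card_pos_iff.2 ⟨v⟩
  rw [sCond, div_le_iff₀ (by positivity)]
  refine (card_starEmb_leaf_le A v hz hs hi hj).trans_eq ?_
  rw [← hij, Nat.add_sub_cancel, pow_succ, mul_pow]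
  field_simp

lemma sCond_inLeaf_le {z : Fin (k + l + 1)} (hz : z ∈ inLeaves k l) :
    sCond k l A z v ≤ lam0 k (l - 1) * ((outOnly A v).card / Fintype.card V) *
      (1 - rho A v) ^ (k + l - 1) := by
  have hzO : z ∉ outLeaves k l := Finset.disjoint_right.1 (disjoint_outLeaves_inLeaves k l) hz
  have hz0 : z ≠ 0 := by rintro rfl; simp at hz
  have hl : 0 < l := by simpa using Finset.card_pos.2 ⟨z, hz⟩
  refine sCond_leaf_le A v hz0 ?_ ?_ ?_ (by omega)
  · rintro φ hφ rfl
    exact hφ.apply_zero_mem_outOnly hz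
  · rw [Finset.erase_eq_of_notMem hzO, card_outLeaves]
  · rw [Finset.card_erase_of_mem hz, card_inLeaves]

lemma sCond_outLeaf_le {z : Fin (k + l + 1)} (hz : z ∈ outLeaves k l) :
    sCond k l A z v ≤ lam0 (k - 1) l * ((inOnly A v).card / Fintype.card V) *
      (1 - rho A v) ^ (k + l - 1) := by
  have hzI : z ∉ inLeaves k l := Finset.disjoint_left.1 (disjoint_outLeaves_inLeaves k l) hz
  have hz0 : z ≠ 0 := by rintro rfl; simp at hz
  have hk : 0 < k := by simpa using Finset.card_pos.2 ⟨z, hz⟩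
  refine sCond_leaf_le A v hz0 ?_ ?_ ?_ (by omega)
  · rintro φ hφ rfl
    exact hφ.apply_zero_mem_inOnly hz
  · rw [Finset.card_erase_of_mem hz, card_outLeaves]
  · rw [Finset.erase_eq_of_notMem hzI, card_inLeaves]

open scoped Fin.NatCast in
lemma mul_sCond_inLeaf_add_mul_sCond_outLeaf_le (hl : 1 ≤ l) (hlk : l ≤ k) :
    l * sCond k l A ((k + 1 : ℕ) : Fin (k + l + 1)) v + k * sCond k l A 1 v ≤
      lam1 k l * rho A v * (1 - rho A v) ^ (k + l - 1) := by
  set p : ℝ := (outOnly A v).card / Fintype.card V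
  set q : ℝ := (inOnly A v).card / Fintype.card V
  set R : ℝ := (1 - rho A v) ^ (k + l - 1)
  have hR : 0 ≤ R := pow_nonneg (sub_nonneg.2 (rho_le_one A v)) _
  have inLeaf_mem : ((k + 1 : ℕ) : Fin (k + l + 1)) ∈ inLeaves k l := by
    rw [mem_inLeaves, Fin.val_cast_of_lt (by omega)]
  have outLeaf_mem : (1 : Fin (k + l + 1)) ∈ outLeaves k l := by
    rw [mem_outLeaves, Fin.val_one', Nat.mod_eq_of_lt (by omega)]
    omega
  calc l * sCond k l A ((k + 1 : ℕ) : Fin (k + l + 1)) v + k * sCond k l A 1 v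
      ≤ l * (lam0 k (l - 1) * p * R) + k * (lam0 (k - 1) l * q * R) := by
        gcongr
        exacts [sCond_inLeaf_le A v inLeaf_mem, sCond_outLeaf_le A v outLeaf_mem]
    _ = l * lam0 k (l - 1) * (p * R) + k * lam0 (k - 1) l * (q * R) := by ring
    _ ≤ l * lam0 k (l - 1) * (p * R) + l * lam0 k (l - 1) * (q * R) := by
        gcongr _ + ?_ * _
        exact mul_lam0_pred_le hl hlk
    _ = lam1 k l * (p + q) * R := by rw [lam1_eq_mul_lam0 hl]; ring
    _ ≤ lam1 k l * rho A v * R := by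
        have hlam : 0 ≤ lam1 k l := by
          rw [lam1_eq_mul_lam0 hl]
          exact mul_nonneg (Nat.cast_nonneg _) (lam0_nonneg _ _)
        gcongr
        exact card_outOnly_div_add_card_inOnly_div_le_rho A v

end Probabilities

theorem stmt8_general {k l : ℕ} (hl : 1 ≤ l) (hlk : l ≤ k) {V : Type*} [Fintype V]
    (A : V → V → Prop) (v : V) :
    sVert k l A v ≤ (1 / ((k : ℝ) + l + 1)) *
      (lam0 k l * rho A v ^ (k + l) + lam1 k l * rho A v * (1 - rho A v) ^ (k + l - 1)) := by
  rw [sVert, one_div_mul_eq_div, add_assoc]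
  gcongr
  exacts [sCond_center_le A v, mul_sCond_inLeaf_add_mul_sCond_outLeaf_le A v hl hlk]

theorem stmt8 (k l : ℕ) (hl : 1 ≤ l) (hlk : l ≤ k) (hm : 6 ≤ k + l)
    (V : Type) [Fintype V] (A : V → V → Prop)
    (hirr : Irreflexive A) (hopp : ∀ u v, A u v → ¬ A v u) (hn : 1 ≤ Fintype.card V)
    (v : V) :
    sVert k l A v ≤ (1 / ((k : ℝ) + l + 1)) *
      (lam0 k l * rho A v ^ (k + l) + lam1 k l * rho A v * (1 - rho A v) ^ (k + l - 1)) :=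
  stmt8_general hl hlk A v
end

section
/- Suppose X ≠ ∅ and Y ≠ ∅. Then λ₀ α (1−α)^m + λ₁ α (1−D)^{m−1} + λ₀ (1−α) β^m ≥ S/(m+1). -/
open scoped BigOperators

/-!
Copies of the star in `G` have the center in `X` and all leaves in `Y`, or all vertices in `Y`, or
a leaf in `X`; the three terms of the bound correspond to these cases. Given the center `c`, the
out- and in-leaves lie in the disjoint sets `N⁺(c)` and `N⁻(c)`, so the weighted AM–GM inequality
`a ^ k * b ^ l ≤ λ₀ (a + b) ^ m` handles the first two. If a leaf is mapped to `x ∈ X`, then the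
center is a neighbor of `x` and, the copy being induced, the other `m - 1` leaves are non-neighbors
of `x`. By AM–GM with one leaf removed, summing over the leaves gives
`k λ₀(k - 1, l) ρ⁻(x) + l λ₀(k, l - 1) ρ⁺(x)` times `(1 - ρ(x)) ^ (m - 1)`, and
`k λ₀(k - 1, l) ≤ l λ₀(k, l - 1) = λ₁` because `l ≤ k`. Finally `s(v)` averages to the probability
of `𝒮`, which is therefore at least its minimum.
-/

namespace OrientedStar

open Finset

section Numerics

theorem pow_mul_pow_le_lam0_mul (p q : ℕ) {a b : ℝ} (ha : 0 ≤ a) (hb : 0 ≤ b) :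
    a ^ p * b ^ q ≤ lam0 p q * (a + b) ^ (p + q) := by
  rcases (p + q).eq_zero_or_pos with h | h
  · obtain ⟨rfl, rfl⟩ : p = 0 ∧ q = 0 := by omega
    simp [lam0]
  have hpq : (0 : ℝ) < p + q := by exact_mod_cast h
  have mul_div_le (n : ℕ) {x : ℝ} (hx : 0 ≤ x) : n * (x / n) ≤ x := by
    rcases n.eq_zero_or_pos with rfl | hn
    · simpa using hx
    · exact (mul_div_cancel₀ x (by positivity)).le
  have div_pow_mul_pow (n : ℕ) (x : ℝ) : (x / n) ^ n * n ^ n = x ^ n := by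
    rcases n.eq_zero_or_pos with rfl | hn
    · simp
    · rw [← mul_pow, div_mul_cancel₀ x (by positivity)]
  have amgm : (a / p) ^ p * (b / q) ^ q ≤ ((a + b) / (p + q)) ^ (p + q) := by
    have h := Real.geom_mean_le_arith_mean univ ![(p : ℝ), q] ![a / p, b / q]
      (by simp [Fin.forall_fin_two]) (by simpa [Fin.sum_univ_two] using hpq)
      (by simpa [Fin.forall_fin_two] using ⟨by positivity, by positivity⟩)
    simp only [Fin.prod_univ_two, Fin.sum_univ_two, Matrix.cons_val_zero, Matrix.cons_val_one,
      Real.rpow_natCast] at h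
    rw [Real.rpow_inv_le_iff_of_pos (by positivity) (by positivity) hpq, ← Nat.cast_add,
      Real.rpow_natCast, Nat.cast_add] at h
    exact h.trans <| by gcongr <;> exact mul_div_le _ ‹_›
  calc a ^ p * b ^ q
      = (a / p) ^ p * (b / q) ^ q * ((p : ℝ) ^ p * (q : ℝ) ^ q) := by
        rw [← div_pow_mul_pow p a, ← div_pow_mul_pow q b]; ring
    _ ≤ ((a + b) / (p + q)) ^ (p + q) * ((p : ℝ) ^ p * (q : ℝ) ^ q) := by gcongr
    _ = lam0 p q * (a + b) ^ (p + q) := by rw [lam0, div_pow]; ring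

theorem lam0_nonneg (p q : ℕ) : 0 ≤ lam0 p q := by unfold lam0; positivity

theorem lam1_succ (k l : ℕ) : lam1 k (l + 1) = (l + 1) * lam0 k l := by
  simp only [lam1, lam0, ← add_assoc, Nat.add_sub_cancel, Nat.cast_add, Nat.cast_one,
    add_sub_cancel_right]
  ring

theorem lam1_eq_mul_lam0 (k : ℕ) {l : ℕ} (hl : 1 ≤ l) : lam1 k l = l * lam0 k (l - 1) := by
  obtain ⟨l, rfl⟩ := Nat.exists_eq_add_of_le' hl
  simp [lam1_succ]

theorem lam1_nonneg (k l : ℕ) : 0 ≤ lam1 k l := by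
  rcases l with _ | l
  · simp [lam1]
  · rw [lam1_succ]
    exact mul_nonneg (by positivity) (lam0_nonneg k l)

-- Equivalently, `(1 + 1 / j) ^ j` increases with `j`.
theorem pow_mul_succ_pow_le_succ_pow_mul_pow {i j : ℕ} (h : j ≤ i) :
    (i : ℝ) ^ i * (j + 1 : ℝ) ^ j ≤ (i + 1 : ℝ) ^ i * (j : ℝ) ^ j := by
  obtain ⟨d, rfl⟩ := Nat.exists_eq_add_of_le h
  have pow_self_pos (n : ℕ) : (0 : ℝ) < (n : ℝ) ^ n := by exact_mod_cast Nat.pow_self_pos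
  have amgm := pow_mul_pow_le_lam0_mul j d (a := j + 1) (b := d) (by positivity) (by positivity)
  rw [lam0, ← Nat.cast_add, div_mul_eq_mul_div, le_div_iff₀ (pow_self_pos _)] at amgm
  refine le_of_mul_le_mul_right ?_ (pow_self_pos d)
  calc _ = (j + 1 : ℝ) ^ j * (d : ℝ) ^ d * ((j + d : ℕ) : ℝ) ^ (j + d) := by ring
    _ ≤ _ := amgm
    _ = _ := by push_cast; ring

theorem mul_lam0_pred_le_lam1 {k l : ℕ} (hl : 1 ≤ l) (hlk : l ≤ k) :
    k * lam0 (k - 1) l ≤ lam1 k l := by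
  obtain ⟨j, rfl⟩ := Nat.exists_eq_add_of_le' hl
  obtain ⟨i, rfl⟩ := Nat.exists_eq_add_of_le' (hl.trans hlk)
  have hji := pow_mul_succ_pow_le_succ_pow_mul_pow (Nat.le_of_succ_le_succ hlk)
  have hexp : i + 1 + j = i + (j + 1) := by ring
  have hden : (i : ℝ) + 1 + j = i + (j + 1) := by ring
  simp only [lam1_succ, lam0, Nat.add_sub_cancel, Nat.cast_add, Nat.cast_one, hexp, hden,
    ← mul_div_assoc]
  refine div_le_div_of_nonneg_right ?_ (by positivity)
  calc (i + 1 : ℝ) * (i ^ i * (j + 1) ^ (j + 1))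
      = (i + 1) * (j + 1) * (i ^ i * (j + 1) ^ j) := by ring
    _ ≤ (i + 1) * (j + 1) * ((i + 1) ^ i * j ^ j) := by gcongr
    _ = (j + 1) * ((i + 1) ^ (i + 1) * j ^ j) := by ring

end Numerics

section Counting

theorem card_le_pow_mul_pow {ι α : Type*} [Finite ι] [Finite α] {P Q : Finset ι}
    (hPQ : Disjoint P Q) {S T : Set α} {g : ι → α} {p : (ι → α) → Prop}
    (hP : ∀ φ, p φ → ∀ i ∈ P, φ i ∈ S) (hQ : ∀ φ, p φ → ∀ i ∈ Q, φ i ∈ T)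
    (hg : ∀ φ, p φ → ∀ i, i ∉ P → i ∉ Q → φ i = g i) :
    Nat.card {φ // p φ} ≤ Nat.card S ^ #P * Nat.card T ^ #Q := by
  classical
  have := Fintype.ofFinite ι
  let U (i : ι) : Set α := if i ∈ P then S else if i ∈ Q then T else {g i}
  have mem_U (φ : {φ // p φ}) (i : ι) : φ.1 i ∈ U i := by
    by_cases hiP : i ∈ P
    · simpa [U, hiP] using hP φ φ.2 i hiP
    by_cases hiQ : i ∈ Q
    · simpa [U, hiP, hiQ] using hQ φ φ.2 i hiQ
    · simpa [U, hiP, hiQ] using hg φ φ.2 i hiP hiQ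
  have card_U (i : ι) :
      Nat.card (U i) = (if i ∈ P then Nat.card S else 1) * if i ∈ Q then Nat.card T else 1 := by
    by_cases hiP : i ∈ P
    · simp [U, hiP, disjoint_left.1 hPQ hiP]
    · by_cases hiQ : i ∈ Q <;> simp [U, hiP, hiQ]
  calc Nat.card {φ // p φ}
      ≤ Nat.card (∀ i, U i) := Nat.card_le_card_of_injective (fun φ i => ⟨φ.1 i, mem_U φ i⟩)
        fun φ ψ h => Subtype.ext <| funext fun i => congrArg Subtype.val (congrFun h i)
    _ = Nat.card S ^ #P * Nat.card T ^ #Q := by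
        simp only [Nat.card_pi, card_U, prod_mul_distrib, prod_ite_mem, univ_inter, prod_const]

theorem sum_card_fiber {α β : Type*} [Finite α] (p : α → Prop) (f : α → β) (s : Finset β) :
    ∑ b ∈ s, Nat.card {a // p a ∧ f a = b} = Nat.card {a // p a ∧ f a ∈ s} := by
  classical
  have := Fintype.ofFinite α
  simp only [Nat.card_eq_fintype_card, Fintype.card_subtype]
  rw [card_eq_sum_card_fiberwise (f := f) (t := s) fun a ha => (mem_filter.1 ha).2.2]
  refine sum_congr rfl fun b hb => congrArg card ?_
  ext a
  simp only [mem_filter, mem_univ, true_and]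
  grind

end Counting

section Density

variable {V : Type*} [Fintype V]

theorem muSet_mono {B C : Set V} (h : B ⊆ C) : muSet B ≤ muSet C := by
  unfold muSet
  gcongr
  exact Nat.card_mono C.toFinite h

theorem muSet_nonneg (B : Set V) : 0 ≤ muSet B := by unfold muSet; positivity

theorem muSet_le_one (B : Set V) : muSet B ≤ 1 :=
  div_le_one_of_le₀ (by rw [← Nat.card_eq_fintype_card]; exact_mod_cast Finite.card_subtype_le _)
    (by positivity)

theorem muSet_union {B C : Set V} (h : Disjoint B C) : muSet (B ∪ C) = muSet B + muSet C := by
  simp only [muSet, Nat.card_coe_set_eq, Set.ncard_union_eq h, Nat.cast_add, add_div]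

theorem muSet_compl [Nonempty V] (B : Set V) : muSet Bᶜ = 1 - muSet B := by
  rw [eq_sub_iff_add_eq, ← muSet_union disjoint_compl_left, Set.compl_union_self, muSet,
    Nat.card_univ, Nat.card_eq_fintype_card, div_self (by positivity)]

open Classical in
theorem sum_div_card_le_muSet_mul {B : Set V} {g : V → ℝ} {c : ℝ} (h : ∀ v ∈ B, g v ≤ c) :
    (∑ v ∈ B.toFinset, g v) / Fintype.card V ≤ muSet B * c := by
  have hsum := sum_le_card_nsmul B.toFinset g c fun v hv => h v (Set.mem_toFinset.1 hv)
  rw [muSet, div_mul_eq_mul_div, Nat.card_eq_card_toFinset, ← nsmul_eq_mul]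
  gcongr

open Classical in
theorem card_div_eq_sum_fiber {α : Type*} [Finite α] (p : α → Prop) (f : α → V) (B : Set V)
    (r : ℕ) :
    (Nat.card {a // p a ∧ f a ∈ B} : ℝ) / (Fintype.card V : ℝ) ^ (r + 1) =
      (∑ v ∈ B.toFinset, (Nat.card {a // p a ∧ f a = v} : ℝ) / (Fintype.card V : ℝ) ^ r) /
        Fintype.card V := by
  have h := sum_card_fiber p f B.toFinset
  simp only [Set.mem_toFinset] at h
  rw [← h, Nat.cast_sum, ← sum_div, div_div, pow_succ]

variable {A : V → V → Prop}

theorem rhoPIn_add_rhoMIn (hopp : ∀ u v, A u v → ¬ A v u) (B : Set V) (v : V) :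
    rhoPIn A B v + rhoMIn A B v = rhoIn A B v := by
  have hdisj : Disjoint {u | A v u ∧ u ∈ B} {u | A u v ∧ u ∈ B} :=
    Set.disjoint_left.2 fun u hu hu' => hopp _ _ hu.1 hu'.1
  have hunion : {u | A v u ∧ u ∈ B} ∪ {u | A u v ∧ u ∈ B} = {u | (A v u ∨ A u v) ∧ u ∈ B} := by
    ext u
    simp only [Set.mem_union, Set.mem_ofPred_eq, or_and_right]
  exact (muSet_union hdisj).symm.trans (congrArg muSet hunion)

theorem rhoPIn_nonneg (A : V → V → Prop) (B : Set V) (v : V) : 0 ≤ rhoPIn A B v :=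
  muSet_nonneg {u | A v u ∧ u ∈ B}

theorem rhoMIn_nonneg (A : V → V → Prop) (B : Set V) (v : V) : 0 ≤ rhoMIn A B v :=
  muSet_nonneg {u | A u v ∧ u ∈ B}

theorem rhoIn_nonneg (A : V → V → Prop) (B : Set V) (v : V) : 0 ≤ rhoIn A B v :=
  muSet_nonneg {u | (A v u ∨ A u v) ∧ u ∈ B}

theorem rhoIn_le_muSet (A : V → V → Prop) (B : Set V) (v : V) : rhoIn A B v ≤ muSet B :=
  muSet_mono (B := {u | (A v u ∨ A u v) ∧ u ∈ B}) fun _ hu => hu.2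

theorem rho_le_one (A : V → V → Prop) (v : V) : rho A v ≤ 1 := muSet_le_one {u | A v u ∨ A u v}

end Density

section Leaves

variable {k l : ℕ}

/-- The set `O` of out-leaves of the star `S_{k,l}`, which sit at the positions `1, …, k`. -/
def outLeaves (k l : ℕ) : Finset (Fin (k + l + 1)) := Ioc 0 ⟨k, by omega⟩

/-- The set `I` of in-leaves of the star `S_{k,l}`, which sit at the positions
`k + 1, …, k + l`. -/
def inLeaves (k l : ℕ) : Finset (Fin (k + l + 1)) := Ioi ⟨k, by omega⟩

theorem card_outLeaves (k l : ℕ) : #(outLeaves k l) = k := by simp [outLeaves]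

theorem card_inLeaves (k l : ℕ) : #(inLeaves k l) = l := by simp [inLeaves]

theorem disjoint_outLeaves_inLeaves (k l : ℕ) : Disjoint (outLeaves k l) (inLeaves k l) :=
  disjoint_left.2 fun _ ho hi => (mem_Ioc.1 ho).2.not_gt (mem_Ioi.1 hi)

theorem outLeaves_union_inLeaves (k l : ℕ) : outLeaves k l ∪ inLeaves k l = {0}ᶜ := by
  ext j
  simp only [outLeaves, inLeaves, mem_union, mem_Ioc, mem_Ioi, mem_compl, mem_singleton,
    Fin.lt_def, Fin.le_def, Fin.ext_iff, Fin.val_zero]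
  omega

theorem mem_outLeaves_or_mem_inLeaves {j : Fin (k + l + 1)} :
    j ∈ outLeaves k l ∨ j ∈ inLeaves k l ↔ j ≠ 0 := by
  rw [← mem_union, outLeaves_union_inLeaves, mem_compl, mem_singleton]

variable {V : Type*} {A : V → V → Prop} {φ : Fin (k + l + 1) → V} {i j : Fin (k + l + 1)}

theorem _root_.IsStarEmb.adj_of_mem_outLeaves (h : IsStarEmb k l A φ) (hj : j ∈ outLeaves k l) :
    A (φ 0) (φ j) :=
  (h.2 0 j).1 <| Or.inl ⟨rfl, (mem_Ioc.1 hj).1, (mem_Ioc.1 hj).2⟩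

theorem _root_.IsStarEmb.adj_of_mem_inLeaves (h : IsStarEmb k l A φ) (hj : j ∈ inLeaves k l) :
    A (φ j) (φ 0) :=
  (h.2 j 0).1 <| Or.inr ⟨rfl, mem_Ioi.1 hj⟩

theorem _root_.IsStarEmb.not_adj_of_ne_zero (h : IsStarEmb k l A φ) (hi : i ≠ 0) (hj : j ≠ 0) :
    ¬ A (φ i) (φ j) := by
  rw [← h.2 i j, StarArc]
  simp only [← Fin.val_ne_zero_iff] at hi hj
  omega

end Leaves

section StarProb

variable {k l : ℕ} {V : Type*} [Fintype V] {A : V → V → Prop}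

theorem card_div_pow_le_lam0_mul_rhoIn_pow (hopp : ∀ u v, A u v → ¬ A v u)
    {P Q : Finset (Fin (k + l + 1))} (hP : P ⊆ outLeaves k l) (hQ : Q ⊆ inLeaves k l)
    {B : Set V} {g : Fin (k + l + 1) → V} {p : (Fin (k + l + 1) → V) → Prop}
    (hemb : ∀ φ, p φ → IsStarEmb k l A φ) (hB : ∀ φ, p φ → ∀ j ∈ P ∪ Q, φ j ∈ B)
    (hg : ∀ φ, p φ → ∀ j ∉ P ∪ Q, φ j = g j) :
    (Nat.card {φ // p φ} : ℝ) / (Fintype.card V : ℝ) ^ (#P + #Q) ≤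
      lam0 #P #Q * rhoIn A B (g 0) ^ (#P + #Q) := by
  have center (φ) (hφ : p φ) : φ 0 = g 0 := by
    refine hg φ hφ 0 fun h => ?_
    exact mem_outLeaves_or_mem_inLeaves.1 ((mem_union.1 h).imp (@hP 0) (@hQ 0)) rfl
  have count : Nat.card {φ // p φ} ≤
      Nat.card {u | A (g 0) u ∧ u ∈ B} ^ #P * Nat.card {u | A u (g 0) ∧ u ∈ B} ^ #Q := by
    refine card_le_pow_mul_pow ((disjoint_outLeaves_inLeaves k l).mono hP hQ) (g := g)
      (fun φ hφ j hj => ?_) (fun φ hφ j hj => ?_)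
      fun φ hφ j hjP hjQ => hg φ hφ j (notMem_union.2 ⟨hjP, hjQ⟩)
    · exact ⟨center φ hφ ▸ (hemb φ hφ).adj_of_mem_outLeaves (hP hj),
        hB φ hφ j (mem_union_left _ hj)⟩
    · exact ⟨center φ hφ ▸ (hemb φ hφ).adj_of_mem_inLeaves (hQ hj),
        hB φ hφ j (mem_union_right _ hj)⟩
  calc (Nat.card {φ // p φ} : ℝ) / (Fintype.card V : ℝ) ^ (#P + #Q)
      ≤ ((Nat.card {u | A (g 0) u ∧ u ∈ B} ^ #P * Nat.card {u | A u (g 0) ∧ u ∈ B} ^ #Q : ℕ) : ℝ) /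
          (Fintype.card V : ℝ) ^ (#P + #Q) := by gcongr
    _ = rhoPIn A B (g 0) ^ #P * rhoMIn A B (g 0) ^ #Q := by
        rw [Nat.cast_mul, Nat.cast_pow, Nat.cast_pow, pow_add, mul_div_mul_comm, ← div_pow,
          ← div_pow]
        rfl
    _ ≤ lam0 #P #Q * rhoIn A B (g 0) ^ (#P + #Q) := by
        rw [← rhoPIn_add_rhoMIn hopp]
        exact pow_mul_pow_le_lam0_mul _ _ (rhoPIn_nonneg ..) (rhoMIn_nonneg ..)

theorem sCondOn_leaves_mem_le (hopp : ∀ u v, A u v → ¬ A v u) (B : Set V) (c : V) :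
    sCondOn k l A c (fun φ => ∀ j ≠ 0, φ j ∈ B) ≤ lam0 k l * rhoIn A B c ^ (k + l) := by
  have h := card_div_pow_le_lam0_mul_rhoIn_pow hopp (Subset.refl (outLeaves k l))
    (Subset.refl (inLeaves k l)) (B := B) (g := fun _ => c)
    (p := fun φ => IsStarEmb k l A φ ∧ φ 0 = c ∧ ∀ j ≠ 0, φ j ∈ B) (fun φ hφ => hφ.1)
    (fun φ hφ j hj => hφ.2.2 j (mem_outLeaves_or_mem_inLeaves.1 (mem_union.1 hj)))
    (fun φ hφ j hj => ?_)
  · rwa [card_outLeaves, card_inLeaves] at h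
  · rw [outLeaves_union_inLeaves, notMem_compl, mem_singleton] at hj
    rw [hj, hφ.2.1]

theorem card_center_eq_leaf_eq_div_pow_le (hopp : ∀ u v, A u v → ¬ A v u)
    {z : Fin (k + l + 1)} (hz : z ≠ 0) (c x : V) {p q : ℕ}
    (hp : #((outLeaves k l).erase z) = p) (hq : #((inLeaves k l).erase z) = q) :
    (Nat.card {φ // (IsStarEmb k l A φ ∧ φ z = x) ∧ φ 0 = c} : ℝ) /
      (Fintype.card V : ℝ) ^ (p + q) ≤ lam0 p q * (1 - rho A x) ^ (p + q) := by
  have : Nonempty V := ⟨x⟩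
  have mem_erase_union (j) : j ∈ (outLeaves k l).erase z ∪ (inLeaves k l).erase z ↔
      j ≠ z ∧ j ≠ 0 := by
    rw [← erase_union_distrib, mem_erase, mem_union, mem_outLeaves_or_mem_inLeaves]
  let nonNbrs : Set V := {u | A x u ∨ A u x}ᶜ
  have h := card_div_pow_le_lam0_mul_rhoIn_pow hopp (erase_subset z (outLeaves k l))
    (erase_subset z (inLeaves k l)) (B := nonNbrs) (g := fun j => if j = 0 then c else x)
    (p := fun φ => (IsStarEmb k l A φ ∧ φ z = x) ∧ φ 0 = c) (fun φ hφ => hφ.1.1)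
    (fun φ ⟨⟨hemb, hx⟩, _⟩ j hj => ?_) (fun φ ⟨⟨_, hx⟩, hc⟩ j hj => ?_)
  · rw [hp, hq] at h
    refine h.trans (mul_le_mul_of_nonneg_left ?_ (lam0_nonneg p q))
    rw [show 1 - rho A x = muSet nonNbrs from (muSet_compl _).symm]
    exact pow_le_pow_left₀ (rhoIn_nonneg ..) (rhoIn_le_muSet ..) _
  · have hj0 : j ≠ 0 := ((mem_erase_union j).1 hj).2
    rintro (h | h)
    · exact hemb.not_adj_of_ne_zero hz hj0 (hx ▸ h)
    · exact hemb.not_adj_of_ne_zero hj0 hz (hx ▸ h)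
  · rw [mem_erase_union] at hj
    grind

theorem sCond_le_of_ne_zero (hopp : ∀ u v, A u v → ¬ A v u) {z : Fin (k + l + 1)} (hz : z ≠ 0)
    {x : V} {N : Set V} (hN : ∀ φ, IsStarEmb k l A φ → φ z = x → φ 0 ∈ N) {p q : ℕ}
    (hp : #((outLeaves k l).erase z) = p) (hq : #((inLeaves k l).erase z) = q)
    (hpq : k + l = p + q + 1) :
    sCond k l A z x ≤ muSet N * (lam0 p q * (1 - rho A x) ^ (p + q)) := by
  have event_eq : {φ | IsStarEmb k l A φ ∧ φ z = x} =
      {φ | (IsStarEmb k l A φ ∧ φ z = x) ∧ φ 0 ∈ N} := by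
    ext φ
    exact ⟨fun h => ⟨h, hN φ h.1 h.2⟩, And.left⟩
  calc sCond k l A z x
      = (Nat.card {φ | (IsStarEmb k l A φ ∧ φ z = x) ∧ φ 0 ∈ N} : ℝ) /
          (Fintype.card V : ℝ) ^ (p + q + 1) := by rw [← event_eq, ← hpq]; rfl
    _ ≤ muSet N * (lam0 p q * (1 - rho A x) ^ (p + q)) :=
        (card_div_eq_sum_fiber (fun φ => IsStarEmb k l A φ ∧ φ z = x) (· 0) N _).trans_le <|
          sum_div_card_le_muSet_mul fun c _ =>
            card_center_eq_leaf_eq_div_pow_le hopp hz c x hp hq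

theorem sCond_outLeaf_le (hopp : ∀ u v, A u v → ¬ A v u) {z : Fin (k + l + 1)}
    (hz : z ∈ outLeaves k l) (x : V) :
    sCond k l A z x ≤ rhoMIn A Set.univ x * (lam0 (k - 1) l * (1 - rho A x) ^ (k + l - 1)) := by
  have hk : 0 < k := card_outLeaves k l ▸ card_pos.2 ⟨z, hz⟩
  rw [show k + l - 1 = k - 1 + l by omega]
  refine sCond_le_of_ne_zero hopp (mem_outLeaves_or_mem_inLeaves.1 (.inl hz))
    (N := {u | A u x ∧ u ∈ Set.univ})
    (fun φ hφ hx => ⟨by rw [← hx]; exact hφ.adj_of_mem_outLeaves hz, trivial⟩) ?_ ?_ (by omega)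
  · rw [card_erase_of_mem hz, card_outLeaves]
  · rw [erase_eq_of_notMem (disjoint_left.1 (disjoint_outLeaves_inLeaves k l) hz), card_inLeaves]

theorem sCond_inLeaf_le (hopp : ∀ u v, A u v → ¬ A v u) {z : Fin (k + l + 1)}
    (hz : z ∈ inLeaves k l) (x : V) :
    sCond k l A z x ≤ rhoPIn A Set.univ x * (lam0 k (l - 1) * (1 - rho A x) ^ (k + l - 1)) := by
  have hl : 0 < l := card_inLeaves k l ▸ card_pos.2 ⟨z, hz⟩
  rw [show k + l - 1 = k + (l - 1) by omega]
  refine sCond_le_of_ne_zero hopp (mem_outLeaves_or_mem_inLeaves.1 (.inr hz))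
    (N := {u | A x u ∧ u ∈ Set.univ})
    (fun φ hφ hx => ⟨by rw [← hx]; exact hφ.adj_of_mem_inLeaves hz, trivial⟩) ?_ ?_ (by omega)
  · rw [erase_eq_of_notMem (disjoint_right.1 (disjoint_outLeaves_inLeaves k l) hz),
      card_outLeaves]
  · rw [card_erase_of_mem hz, card_inLeaves]

theorem sum_sCond_leaves_le (hl : 1 ≤ l) (hlk : l ≤ k) (hopp : ∀ u v, A u v → ¬ A v u) (x : V) :
    ∑ z ∈ {0}ᶜ, sCond k l A z x ≤ lam1 k l * (1 - rho A x) ^ (k + l - 1) := by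
  have hP := rhoPIn_nonneg A Set.univ x
  have hM := rhoMIn_nonneg A Set.univ x
  have hPM : rhoPIn A Set.univ x + rhoMIn A Set.univ x ≤ 1 := by
    rw [rhoPIn_add_rhoMIn hopp]
    exact (rhoIn_le_muSet A Set.univ x).trans (muSet_le_one _)
  have hρ : 0 ≤ (1 - rho A x) ^ (k + l - 1) := pow_nonneg (sub_nonneg.2 (rho_le_one A x)) _
  set ρP := rhoPIn A Set.univ x
  set ρM := rhoMIn A Set.univ x
  set t := (1 - rho A x) ^ (k + l - 1)
  have out_le := sum_le_card_nsmul _ _ _ fun z hz => sCond_outLeaf_le (k := k) (l := l) hopp hz x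
  have in_le := sum_le_card_nsmul _ _ _ fun z hz => sCond_inLeaf_le (k := k) (l := l) hopp hz x
  rw [card_outLeaves, nsmul_eq_mul] at out_le
  rw [card_inLeaves, nsmul_eq_mul] at in_le
  rw [← outLeaves_union_inLeaves, sum_union (disjoint_outLeaves_inLeaves k l)]
  calc _ ≤ k * (ρM * (lam0 (k - 1) l * t)) + l * (ρP * (lam0 k (l - 1) * t)) :=
        add_le_add out_le in_le
    _ = ρM * t * (k * lam0 (k - 1) l) + ρP * t * lam1 k l := by rw [lam1_eq_mul_lam0 k hl]; ring
    _ ≤ ρM * t * lam1 k l + ρP * t * lam1 k l := by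
        gcongr
        exact mul_lam0_pred_le_lam1 hl hlk
    _ = (ρP + ρM) * (lam1 k l * t) := by ring
    _ ≤ lam1 k l * t := mul_le_of_le_one_left (mul_nonneg (lam1_nonneg k l) hρ) hPM

open Classical in
theorem starProbOn_mem_eq_sum_sCond (z : Fin (k + l + 1)) (B : Set V) :
    starProbOn k l A (fun φ => φ z ∈ B) =
      (∑ v ∈ B.toFinset, sCond k l A z v) / Fintype.card V :=
  card_div_eq_sum_fiber (IsStarEmb k l A) (fun φ => φ z) B (k + l)

open Classical in
theorem starProbOn_center_mem_eq_sum_sCondOn (B : Set V) (P : (Fin (k + l + 1) → V) → Prop) :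
    starProbOn k l A (fun φ => φ 0 ∈ B ∧ P φ) =
      (∑ v ∈ B.toFinset, sCondOn k l A v P) / Fintype.card V := by
  simpa only [starProbOn, sCondOn, and_assoc, and_comm (a := P _)] using
    card_div_eq_sum_fiber (fun φ => IsStarEmb k l A φ ∧ P φ) (fun φ => φ 0) B (k + l)

theorem starProbOn_or_le (P Q : (Fin (k + l + 1) → V) → Prop) :
    starProbOn k l A (fun φ => P φ ∨ Q φ) ≤ starProbOn k l A P + starProbOn k l A Q := by
  simp only [starProbOn, ← add_div, and_or_left]
  gcongr
  exact_mod_cast Set.ncard_union_le {φ | IsStarEmb k l A φ ∧ P φ} {φ | IsStarEmb k l A φ ∧ Q φ}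

theorem starProbOn_exists_le (I : Finset (Fin (k + l + 1)))
    (P : Fin (k + l + 1) → (Fin (k + l + 1) → V) → Prop) :
    starProbOn k l A (fun φ => ∃ z ∈ I, P z φ) ≤ ∑ z ∈ I, starProbOn k l A (P z) := by
  induction I using Finset.induction_on with
  | empty => simp [starProbOn]
  | insert z I hz ih =>
    simp only [exists_mem_insert, sum_insert hz]
    exact (starProbOn_or_le _ _).trans (add_le_add_right ih _)

theorem starProb_eq_starProbOn {P : (Fin (k + l + 1) → V) → Prop} (hP : ∀ φ, P φ) :
    starProb k l V A = starProbOn k l A P := by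
  simp only [starProb, starProbOn, hP, and_true]

theorem starProbOn_center_leaves_le (hopp : ∀ u v, A u v → ¬ A v u) {B C : Set V} {b : ℝ}
    (hb : ∀ v ∈ B, rhoIn A C v ≤ b) :
    starProbOn k l A (fun φ => φ 0 ∈ B ∧ ∀ j ≠ 0, φ j ∈ C) ≤
      muSet B * (lam0 k l * b ^ (k + l)) := by
  classical
  rw [starProbOn_center_mem_eq_sum_sCondOn]
  refine sum_div_card_le_muSet_mul fun v hv => (sCondOn_leaves_mem_le hopp C v).trans ?_
  exact mul_le_mul_of_nonneg_left (pow_le_pow_left₀ (rhoIn_nonneg ..) (hb v hv) _)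
    (lam0_nonneg k l)

theorem starProbOn_exists_leaf_mem_le (hl : 1 ≤ l) (hlk : l ≤ k)
    (hopp : ∀ u v, A u v → ¬ A v u) {B : Set V} {d : ℝ} (hd : ∀ x ∈ B, d ≤ rho A x) :
    starProbOn k l A (fun φ => ∃ z ∈ ({0}ᶜ : Finset (Fin (k + l + 1))), φ z ∈ B) ≤
      muSet B * (lam1 k l * (1 - d) ^ (k + l - 1)) := by
  classical
  refine (starProbOn_exists_le _ _).trans ?_
  simp only [starProbOn_mem_eq_sum_sCond]
  rw [← sum_div, sum_comm]
  refine sum_div_card_le_muSet_mul fun x hx => (sum_sCond_leaves_le hl hlk hopp x).trans ?_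
  refine mul_le_mul_of_nonneg_left (pow_le_pow_left₀ ?_ ?_ _) (lam1_nonneg k l)
  · exact sub_nonneg.2 (rho_le_one A x)
  · exact sub_le_sub_left (hd x hx) 1

theorem starProb_le [Nonempty V] (hl : 1 ≤ l) (hlk : l ≤ k) (hopp : ∀ u v, A u v → ¬ A v u)
    {X : Set V} {d b : ℝ} (hd : ∀ x ∈ X, d ≤ rho A x) (hb : ∀ y ∈ Xᶜ, rhoIn A Xᶜ y ≤ b) :
    starProb k l V A ≤ lam0 k l * muSet X * (1 - muSet X) ^ (k + l) +
      lam1 k l * muSet X * (1 - d) ^ (k + l - 1) + lam0 k l * (1 - muSet X) * b ^ (k + l) := by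
  have cover (φ : Fin (k + l + 1) → V) : ((φ 0 ∈ X ∧ ∀ j ≠ 0, φ j ∈ Xᶜ) ∨
      ∃ z ∈ ({0}ᶜ : Finset (Fin (k + l + 1))), φ z ∈ X) ∨ (φ 0 ∈ Xᶜ ∧ ∀ j ≠ 0, φ j ∈ Xᶜ) := by
    simp only [mem_compl, mem_singleton, Set.mem_compl_iff]
    grind
  have center_mem := starProbOn_center_leaves_le (k := k) (l := l) hopp (B := X) (C := Xᶜ)
    fun v _ => rhoIn_le_muSet A Xᶜ v
  have leaf_mem := starProbOn_exists_leaf_mem_le hl hlk hopp hd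
  have none_mem := starProbOn_center_leaves_le (k := k) (l := l) hopp hb
  rw [muSet_compl] at center_mem none_mem
  rw [starProb_eq_starProbOn cover]
  refine (starProbOn_or_le _ _).trans <| (add_le_add_left (starProbOn_or_le _ _) _).trans ?_
  linarith

theorem sum_sCond_div_card (z : Fin (k + l + 1)) :
    (∑ v, sCond k l A z v) / Fintype.card V = starProb k l V A := by
  classical
  rw [starProb_eq_starProbOn fun φ => Set.mem_univ (φ z), starProbOn_mem_eq_sum_sCond]
  simp

theorem sum_sVert_div_card :
    (∑ v, sVert k l A v) / Fintype.card V = starProb k l V A := by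
  simp only [sVert, ← sum_div, sum_add_distrib, ← mul_sum]
  rw [div_right_comm, div_eq_iff (by positivity)]
  simp only [add_div, mul_div_assoc, sum_sCond_div_card]
  ring

theorem sInf_range_sVert_le_starProb [Nonempty V] :
    sInf (Set.range (sVert k l A)) ≤ starProb k l V A := by
  rw [← sum_sVert_div_card, le_div_iff₀' (by positivity), ← nsmul_eq_mul, ← card_univ]
  exact card_nsmul_le_sum _ _ _ fun v _ =>
    csInf_le (Set.finite_range _).bddBelow (Set.mem_range_self v)

end StarProb

end OrientedStar

theorem stmt12_general {k l : ℕ} (hl : 1 ≤ l) (hlk : l ≤ k) {V : Type*} [Fintype V] [Nonempty V]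
    {A : V → V → Prop} (hopp : ∀ u v, A u v → ¬ A v u) :
    Smin k l A / ((k : ℝ) + l + 1) ≤
      lam0 k l * alphaX A * (1 - alphaX A) ^ (k + l)
        + lam1 k l * alphaX A * (1 - Dmin A) ^ (k + l - 1)
        + lam0 k l * (1 - alphaX A) * betaY A ^ (k + l) := by
  rw [Smin, mul_div_cancel_left₀ _ (by positivity)]
  refine OrientedStar.sInf_range_sVert_le_starProb.trans
    (OrientedStar.starProb_le hl hlk hopp (fun x hx => ?_) fun y hy => ?_)
  · exact csInf_le (Set.toFinite _).bddBelow (Set.mem_image_of_mem _ hx)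
  · exact le_csSup (Set.toFinite _).bddAbove (Set.mem_image_of_mem _ hy)

theorem stmt12 (k l : ℕ) (hl : 1 ≤ l) (hlk : l ≤ k) (hm : 6 ≤ k + l)
    (V : Type) [Fintype V] (A : V → V → Prop)
    (hirr : Irreflexive A) (hopp : ∀ u v, A u v → ¬ A v u) (hn : 1 ≤ Fintype.card V)
    (hX : (bigX A).Nonempty) (hY : (bigY A).Nonempty) :
    lam0 k l * alphaX A * (1 - alphaX A) ^ (k + l)
        + lam1 k l * alphaX A * (1 - Dmin A) ^ (k + l - 1)
        + lam0 k l * (1 - alphaX A) * betaY A ^ (k + l)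
      ≥ Smin k l A / ((k : ℝ) + l + 1) :=
  have : Nonempty V := hX.to_type
  stmt12_general hl hlk hopp
end
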